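/- Let p be a prime and let R be a commutative Noetherian local pro-p domain of characteristic p whose Krull dimension equals a natural number d. Then for every natural number n and every subgroup G of GL_n(R) there exist a natural number m and an injective group homomorphism from G into GL_m(𝔽_p⟦t₁, …, t_d⟧), the general linear group over the power series ring in d variables over the field with p elements. -/

import Mathlib

/-!
Let `K = 𝔽_p`. By Cohen's structure theorem `R` is a finite extension of `A = K⟦t₁, …, t_d⟧`. If
`d ≥ 2`, then `A` embeds into the two-variable ring `B = K⟦x, y⟧` by `tᵢ ↦ fᵢ(x) y`, where the
`fᵢ ∈ K⟦x⟧` are algebraically independent over `K`: the coefficient of `yⁿ` in the image of `F` is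
the degree `n` part of `F` evaluated at the `fᵢ`. If `d ≤ 1`, put `B = A`. Since `B` is regular of
dimension at most two, the dual module `Hom_A(R, B)` is free over `B`: it is torsion-free, and in
dimension two it remains so after reduction modulo a variable, where `B` becomes a principal ideal
ring. As `R` acts faithfully on this free module, `R` embeds into a matrix ring over `B`.
-/

open Cardinal IsLocalRing
open scoped Pointwise

/-! ### Duals of finite modules -/

section Dual

variable {A B M : Type*} [CommRing A] [CommRing B] [Algebra A B] [AddCommGroup M] [Module A M]

lemma finite_linearMap [IsNoetherianRing B] [Module.Finite A M] : Module.Finite B (M →ₗ[A] B) := by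
  obtain ⟨n, s, hs⟩ := Module.Finite.exists_fin (R := A) (M := M)
  let evalGenerators : (M →ₗ[A] B) →ₗ[B] (Fin n → B) :=
    LinearMap.pi fun i =>
      { toFun := fun φ => φ (s i)
        map_add' := fun _ _ => rfl
        map_smul' := fun _ _ => rfl }
  exact Module.Finite.of_injective evalGenerators fun φ ψ h =>
    LinearMap.ext_on_range hs fun i => congrFun h i

lemma exists_dual_apply_ne_zero [IsDomain A] [Module.Finite A M] [Module.IsTorsionFree A M]
    {x : M} (hx : x ≠ 0) : ∃ φ : M →ₗ[A] A, φ x ≠ 0 := by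
  let K := FractionRing A
  let ι : M →ₗ[A] LocalizedModule (nonZeroDivisors A) M := LocalizedModule.mkLinearMap _ M
  have hιx : ι x ≠ 0 := by
    rw [Ne, IsLocalizedModule.eq_zero_iff (nonZeroDivisors A)]
    rintro ⟨c, hc⟩
    exact (smul_eq_zero.mp hc).elim (nonZeroDivisors.coe_ne_zero c) hx
  obtain ⟨g, hg⟩ := Module.Projective.exists_dual_ne_zero K hιx
  let h : M →ₗ[A] K := g.restrictScalars A ∘ₗ ι
  obtain ⟨c, hc, hrange⟩ := FractionalIdeal.isFractional_of_fg (S := nonZeroDivisors A)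
    (Submodule.FG.map h Module.Finite.fg_top)
  let e := LinearEquiv.ofInjective (Algebra.linearMap A K) (IsFractionRing.injective A K)
  let ψ : M →ₗ[A] LinearMap.range (Algebra.linearMap A K) :=
    (c • h).codRestrict _ fun m => hrange _ (Submodule.mem_map_of_mem trivial)
  refine ⟨e.symm ∘ₗ ψ, fun h0 => ?_⟩
  have hcx : c • h x = 0 := congrArg Subtype.val (e.symm.map_eq_zero_iff.mp h0)
  exact (smul_eq_zero.mp hcx).elim (nonZeroDivisors.ne_zero hc) hg

lemma exists_smul_eq_of_forall_dvd [IsDomain B] {x : B} (hx : x ≠ 0) (φ : M →ₗ[A] B)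
    (h : ∀ m, x ∣ φ m) : ∃ ψ : M →ₗ[A] B, x • ψ = φ := by
  choose ψ hψ using h
  refine ⟨⟨⟨ψ, fun m n => mul_left_cancel₀ hx ?_⟩, fun a m => mul_left_cancel₀ hx ?_⟩, ?_⟩
  · rw [mul_add, ← hψ, ← hψ, ← hψ, map_add]
  · rw [RingHom.id_apply, mul_smul_comm, ← hψ, ← hψ, map_smul]
  · ext m
    exact (hψ m).symm

lemma isTorsionFree_quotSMulTop_linearMap [IsDomain B] {x : B} (hx : Prime x) :
    Module.IsTorsionFree (B ⧸ Ideal.span {x}) (QuotSMulTop x (M →ₗ[A] B)) := by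
  have := (Ideal.span_singleton_prime hx.ne_zero).mpr hx
  rw [Module.isTorsionFree_iff_smul_eq_zero]
  intro q y h
  obtain ⟨b, rfl⟩ := Ideal.Quotient.mk_surjective q
  obtain ⟨φ, rfl⟩ := Submodule.Quotient.mk_surjective _ y
  obtain ⟨ψ, -, hψ⟩ := (Submodule.mem_smul_pointwise_iff_exists _ _ _).mp
    ((Submodule.Quotient.mk_eq_zero (x • ⊤ : Submodule B (M →ₗ[A] B)) (x := b • φ)).mp h)
  have hdvd (m : M) : x ∣ b * φ m := ⟨ψ m, (LinearMap.congr_fun hψ m).symm⟩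
  refine or_iff_not_imp_left.mpr fun hb => ?_
  rw [Ideal.Quotient.eq_zero_iff_mem, Ideal.mem_span_singleton] at hb
  obtain ⟨χ, hχ⟩ := exists_smul_eq_of_forall_dvd hx.ne_zero φ
    fun m => (hx.dvd_or_dvd (hdvd m)).resolve_left hb
  rw [Submodule.Quotient.mk_eq_zero, Submodule.mem_smul_pointwise_iff_exists]
  exact ⟨χ, trivial, hχ⟩

lemma free_linearMap_of_isPrincipalIdealRing [IsDomain B] [IsPrincipalIdealRing B]
    [Module.Finite A M] : Module.Free B (M →ₗ[A] B) :=
  have := finite_linearMap (A := A) (B := B) (M := M)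
  Module.free_of_finite_type_torsion_free'

lemma free_linearMap_of_isPrincipalIdealRing_quotient [IsDomain B] [IsNoetherianRing B]
    [IsLocalRing B] [Module.Finite A M] {x : B} (hx : Prime x)
    [IsPrincipalIdealRing (B ⧸ Ideal.span {x})] : Module.Free B (M →ₗ[A] B) := by
  have := finite_linearMap (A := A) (B := B) (M := M)
  have := Module.finitePresentation_of_finite B (M →ₗ[A] B)
  have hmem : x ∈ (⊥ : Ideal B).jacobson := by
    rw [IsLocalRing.jacobson_eq_maximalIdeal _ bot_ne_top]
    exact (IsLocalRing.mem_maximalIdeal x).mpr hx.not_isUnit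
  rw [← Module.free_quotSMulTop_iff_free B _ hmem (IsSMulRegular.of_ne_zero hx.ne_zero)]
  have := (Ideal.span_singleton_prime hx.ne_zero).mpr hx
  have := isTorsionFree_quotSMulTop_linearMap (A := A) (M := M) hx
  have : Module.Finite (B ⧸ Ideal.span {x}) (QuotSMulTop x (M →ₗ[A] B)) :=
    Module.Finite.of_restrictScalars_finite B _ _
  exact Module.free_of_finite_type_torsion_free'

end Dual

section DualAction

variable (A B R : Type*) [CommRing A] [CommRing B] [CommRing R] [Algebra A B] [Algebra A R]

/-- The action of `R` on the `B`-module `Hom_A(R, B)` by `(r • φ) s = φ (r * s)`. When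
`Hom_A(R, B)` is free, it represents elements of `R` by matrices over `B`. -/
def dualAction : R →+* Module.End B (R →ₗ[A] B) where
  toFun r :=
    { toFun := fun φ => φ ∘ₗ LinearMap.mulLeft A r
      map_add' := fun _ _ => rfl
      map_smul' := fun _ _ => rfl }
  map_one' := by ext; simp
  map_mul' r s := by ext; simp [mul_left_comm]
  map_zero' := by ext; simp
  map_add' r s := by ext; simp [add_mul]

lemma dualAction_injective [IsDomain A] [FaithfulSMul A B] [Module.Finite A R]
    [Module.IsTorsionFree A R] : Function.Injective (dualAction A B R) := by
  refine (injective_iff_map_eq_zero _).mpr fun r hr => ?_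
  by_contra hr0
  obtain ⟨φ, hφ⟩ := exists_dual_apply_ne_zero (A := A) hr0
  let φB : R →ₗ[A] B := Algebra.linearMap A B ∘ₗ φ
  have hφr : algebraMap A B (φ (r * 1)) = 0 :=
    LinearMap.congr_fun (LinearMap.congr_fun hr φB) 1
  rw [mul_one] at hφr
  exact hφ (FaithfulSMul.algebraMap_injective A B (hφr.trans (map_zero _).symm))

end DualAction

lemma exists_generalLinearGroup_hom_injective_of_end {B N R : Type*} [CommRing B]
    [AddCommGroup N] [Module B N] [Module.Free B N] [Module.Finite B N] [CommRing R]
    (ρ : R →+* Module.End B N) (hρ : Function.Injective ρ) (n : ℕ) :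
    ∃ (m : ℕ) (f : GL (Fin n) R →* GL (Fin m) B), Function.Injective f := by
  classical
  let b := Module.Free.chooseBasis B N
  let J := Module.Free.ChooseBasisIndex B N
  let toMatrix : R →+* Matrix J J B := (LinearMap.toMatrixAlgEquiv b : _ →+* Matrix J J B).comp ρ
  have htoMatrix : Function.Injective toMatrix := (LinearMap.toMatrixAlgEquiv b).injective.comp hρ
  let e := Fintype.equivFin (Fin n × J)
  let I := Fin (Fintype.card (Fin n × J))
  let flatten : Matrix (Fin n) (Fin n) (Matrix J J B) ≃+* Matrix I I B :=
    (Matrix.compRingEquiv (Fin n) J B).trans (Matrix.reindexAlgEquiv B B e).toRingEquiv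
  let τ : Matrix (Fin n) (Fin n) R →+* Matrix I I B :=
    (flatten : _ →+* Matrix I I B).comp toMatrix.mapMatrix
  have hτ : Function.Injective τ :=
    flatten.injective.comp fun _ _ h => Matrix.map_injective htoMatrix h
  exact ⟨_, Units.map τ.toMonoidHom, Units.map_injective hτ⟩

/-! ### Power series rings -/

/-- The isomorphism `C⟦X⟧ / (X) ≃ C` given by the constant coefficient, used to reduce statements
about power series in `n + 1` variables to `n` variables. -/
noncomputable def quotientSpanXEquiv (C : Type*) [CommRing C] :
    (PowerSeries C ⧸ Ideal.span {(PowerSeries.X : PowerSeries C)}) ≃+* C :=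
  have hker : RingHom.ker (PowerSeries.constantCoeff (R := C)) = Ideal.span {PowerSeries.X} := by
    ext f
    rw [RingHom.mem_ker, Ideal.mem_span_singleton, PowerSeries.X_dvd_iff]
  (Ideal.quotEquivOfEq hker.symm).trans
    (RingHom.quotientKerEquivOfSurjective PowerSeries.constantCoeff_surj)

instance isDomain_mvPowerSeries (σ C : Type*) [CommRing C] [IsDomain C] :
    IsDomain (MvPowerSeries σ C) :=
  NoZeroDivisors.to_isDomain _

lemma ringKrullDim_powerSeries (C : Type*) [CommRing C] [IsNoetherianRing C] :
    ringKrullDim (PowerSeries C) = ringKrullDim C + 1 := by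
  have hreg : IsSMulRegular (PowerSeries C) (PowerSeries.X : PowerSeries C) :=
    fun _ _ => PowerSeries.X_mul_cancel
  have hX : PowerSeries.X ∈ Ring.jacobson (PowerSeries C) := by
    rw [← Ideal.jacobson_bot, Ideal.mem_jacobson_bot]
    intro f
    simp [PowerSeries.isUnit_iff_constantCoeff]
  rw [← ringKrullDim_quotient_span_singleton_succ_eq_ringKrullDim_of_mem_jacobson hreg hX,
    ringKrullDim_eq_of_ringEquiv (quotientSpanXEquiv C)]

lemma ringKrullDim_mvPowerSeries_fin (C : Type*) [CommRing C] [IsNoetherianRing C] (n : ℕ) :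
    ringKrullDim (MvPowerSeries (Fin n) C) = ringKrullDim C + n := by
  induction n with
  | zero =>
    rw [ringKrullDim_eq_of_ringEquiv (MvPowerSeries.isEmptyEquiv (Fin 0) C).toRingEquiv,
      Nat.cast_zero, add_zero]
  | succ n ih =>
    rw [ringKrullDim_eq_of_ringEquiv (MvPowerSeries.finSuccEquiv C n).toRingEquiv,
      ringKrullDim_powerSeries, ih, Nat.cast_succ, add_assoc]

lemma isPrincipalIdealRing_mvPowerSeries (σ K : Type*) [Subsingleton σ] [Field K] :
    IsPrincipalIdealRing (MvPowerSeries σ K) := by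
  cases isEmpty_or_nonempty σ with
  | inl _ =>
    let e := (MvPowerSeries.isEmptyEquiv σ K).symm
    exact IsPrincipalIdealRing.of_surjective e e.surjective
  | inr _ =>
    have : Unique σ := Classical.choice (nonempty_unique σ)
    let e : PowerSeries K ≃ₐ[K] MvPowerSeries σ K :=
      MvPowerSeries.renameEquiv K (Equiv.ofUnique Unit σ)
    exact IsPrincipalIdealRing.of_surjective e e.surjective

lemma free_linearMap_mvPowerSeries_fin (A M K : Type*) [CommRing A] [AddCommGroup M]
    [Module A M] [Module.Finite A M] [Field K] {e : ℕ} (he : e ≤ 2)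
    [Algebra A (MvPowerSeries (Fin e) K)] :
    Module.Free (MvPowerSeries (Fin e) K) (M →ₗ[A] MvPowerSeries (Fin e) K) := by
  obtain he | rfl := he.lt_or_eq
  · have : Subsingleton (Fin e) := Fin.subsingleton_iff_le_one.mpr (Nat.le_of_lt_succ he)
    have := isPrincipalIdealRing_mvPowerSeries (Fin e) K
    exact free_linearMap_of_isPrincipalIdealRing
  · let E := (MvPowerSeries.finSuccEquiv K 1).symm.toRingEquiv
    have hX : Prime (E PowerSeries.X) := (MulEquiv.prime_iff E).mpr PowerSeries.X_prime
    have := isPrincipalIdealRing_mvPowerSeries (Fin 1) K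
    let Q := Ideal.quotientEquiv (Ideal.span {PowerSeries.X}) (Ideal.span {E PowerSeries.X}) E
      (by rw [Ideal.map_span, Set.image_singleton]; rfl)
    let q := (quotientSpanXEquiv (MvPowerSeries (Fin 1) K)).symm.trans Q
    have := IsPrincipalIdealRing.of_surjective q q.surjective
    exact free_linearMap_of_isPrincipalIdealRing_quotient hX

/-! ### Cohen's structure theorem -/

lemma isPrecomplete_pi {A ι : Type*} [CommRing A] (I : Ideal A) [Finite ι] (M : ι → Type*)
    [∀ j, AddCommGroup (M j)] [∀ j, Module A (M j)] [∀ j, IsPrecomplete I (M j)] :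
    IsPrecomplete I (∀ j, M j) := by
  classical
  cases nonempty_fintype ι
  refine AdicCompletion.of_surjective_iff.mp fun x => ?_
  choose m hm using fun j => AdicCompletion.of_surjective I (M j) (AdicCompletion.pi I M x j)
  refine ⟨m, (AdicCompletion.piEquivOfFintype I M).injective ?_⟩
  ext1 j
  rw [AdicCompletion.piEquivOfFintype_apply, AdicCompletion.piEquivOfFintype_apply, ← hm j]
  rfl

lemma finite_of_isPrecomplete_of_isHausdorff {A M : Type*} [CommRing A] [AddCommGroup M]
    [Module A M] (I : Ideal A) [IsPrecomplete I A] [IsHausdorff I M]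
    [Module.Finite A (M ⧸ (I • ⊤ : Submodule A M))] : Module.Finite A M := by
  obtain ⟨n, f, hf⟩ := Module.Finite.exists_fin' A (M ⧸ (I • ⊤ : Submodule A M))
  obtain ⟨g, hg⟩ := Module.projective_lifting_property _ f (I • ⊤ : Submodule A M).mkQ_surjective
  have := isPrecomplete_pi I fun _ : Fin n => A
  rw [← hg] at hf
  exact Module.Finite.of_surjective g (surjective_of_mkQ_comp_surjective hf)

section Artinian

variable (K R : Type*) [CommRing K] [CommRing R] [IsLocalRing R] [Algebra K R]
  [Module.Finite K (ResidueField R)]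

lemma finite_of_isArtinianRing_of_finite_residueField [IsArtinianRing R] : Module.Finite K R := by
  have : Module.Finite K (R ⧸ Ring.jacobson R) := by
    rw [IsLocalRing.ringJacobson_eq_maximalIdeal]
    exact ‹Module.Finite K (ResidueField R)›
  exact IsSemiprimaryRing.finite_of_isArtinian K R R

lemma finite_quotient_of_maximalIdeal_mem_minimalPrimes [IsNoetherianRing R] {J : Ideal R}
    (hJ : maximalIdeal R ∈ J.minimalPrimes) : Module.Finite K (R ⧸ J) := by
  have hJ1 : J ≠ ⊤ := fun h => hJ.1.1.ne_top (top_le_iff.mp (h ▸ hJ.1.2))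
  have := Ideal.Quotient.nontrivial_iff.mpr hJ1
  have := IsLocalRing.quotient_artinian_of_mem_minimalPrimes_of_isLocalRing J hJ
  have := IsLocalRing.of_surjective' (Ideal.Quotient.mk J) Ideal.Quotient.mk_surjective
  have : IsLocalHom (algebraMap R (R ⧸ J)) := Ideal.Quotient.mk_surjective.isLocalHom
  have : Module.Finite K (ResidueField (R ⧸ J)) :=
    Module.Finite.trans (ResidueField R) (ResidueField (R ⧸ J))
  exact finite_of_isArtinianRing_of_finite_residueField K (R ⧸ J)

end Artinian

lemma exists_systemOfParameters {R : Type*} [CommRing R] [IsNoetherianRing R] [IsLocalRing R]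
    {d : ℕ} (hdim : ringKrullDim R = d) :
    ∃ x : Fin d → R, maximalIdeal R ∈ (Ideal.span (Set.range x)).minimalPrimes := by
  obtain ⟨s, hs, hcard⟩ := Ideal.exists_finset_card_eq_height_of_isNoetherianRing (maximalIdeal R)
  have hd : s.card = d := by
    rw [← maximalIdeal_height_eq_ringKrullDim, ← hcard] at hdim
    exact_mod_cast hdim
  let e := (s.equivFinOfCardEq hd).symm
  refine ⟨fun i => e i, ?_⟩
  have hrange : Set.range (fun i => (e i : R)) = s := by
    rw [← Function.comp_def, e.surjective.range_comp, Subtype.range_coe]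
  rwa [hrange]

lemma ringKrullDim_le_of_isIntegral (A R : Type*) [CommRing A] [CommRing R] [Algebra A R]
    [Algebra.IsIntegral A R] : ringKrullDim R ≤ ringKrullDim A :=
  Order.krullDim_le_of_strictMono (PrimeSpectrum.comap (algebraMap A R))
    fun _ _ h => Ideal.IsIntegral.comap_lt_comap (R := A) h

lemma algebraMap_injective_of_ringKrullDim_le (A R : Type*) [CommRing A] [IsDomain A]
    [FiniteRingKrullDim A] [CommRing R] [Algebra A R] [Algebra.IsIntegral A R]
    (hdim : ringKrullDim A ≤ ringKrullDim R) : Function.Injective (algebraMap A R) := by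
  refine (injective_iff_map_eq_zero _).mpr fun f hf => ?_
  by_contra hf0
  let g : A ⧸ Ideal.span {f} →+* R :=
    Ideal.Quotient.lift _ (algebraMap A R) fun a ha =>
      (Ideal.span_singleton_le_iff_mem (RingHom.ker (algebraMap A R))).mpr hf ha
  algebraize [g]
  have : IsScalarTower A (A ⧸ Ideal.span {f}) R := IsScalarTower.of_algebraMap_eq fun _ => rfl
  have : Algebra.IsIntegral (A ⧸ Ideal.span {f}) R := Algebra.IsIntegral.tower_top A
  have hlt : ringKrullDim A + 1 ≤ ringKrullDim A := calc
    ringKrullDim A + 1 ≤ ringKrullDim (A ⧸ Ideal.span {f}) + 1 := by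
      gcongr
      exact hdim.trans (ringKrullDim_le_of_isIntegral (A ⧸ Ideal.span {f}) R)
    _ ≤ ringKrullDim A :=
      ringKrullDim_quotient_succ_le_of_nonZeroDivisor (mem_nonZeroDivisors_of_ne_zero hf0)
  have hA : ringKrullDim A = (LTSeries.longestOf (PrimeSpectrum A)).length :=
    Order.krullDim_eq_length_of_finiteDimensionalOrder
  rw [hA] at hlt
  norm_cast at hlt
  omega

lemma exists_mvPowerSeries_algHom_X_eq {K R σ : Type*} [CommRing K] [CommRing R] [Algebra K R]
    [Finite σ] (I : Ideal R) [IsAdicComplete I R] {x : σ → R} (hx : ∀ i, x i ∈ I) :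
    ∃ φ : MvPowerSeries σ K →ₐ[K] R, ∀ i, φ (MvPowerSeries.X i) = x i := by
  let _ : WithIdeal R := ⟨I⟩
  let _ : UniformSpace K := ⊥
  have : DiscreteUniformity K := ⟨rfl⟩
  have hadic : IsAdic I := rfl
  obtain ⟨_, _⟩ := hadic.isAdicComplete_iff.mp inferInstance
  have : ContinuousSMul K R := DiscreteTopology.instContinuousSMul K R
  have hx_eval : MvPowerSeries.HasEval x := by
    refine ⟨fun i => ?_, by simp [Filter.cofinite_eq_bot]⟩
    refine hadic.hasBasis_nhds_zero.tendsto_right_iff.mpr fun n _ => ?_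
    filter_upwards [Filter.eventually_ge_atTop n] with m hm
    exact Ideal.pow_le_pow_right hm (Ideal.pow_mem_pow (hx i) m)
  refine ⟨MvPowerSeries.aeval hx_eval, fun i => ?_⟩
  simpa using MvPowerSeries.aeval_coe (R := K) hx_eval (MvPolynomial.X i)

lemma exists_finite_algHom {K R : Type*} [CommRing K] [CommRing R] [IsNoetherianRing R]
    [IsLocalRing R] [IsAdicComplete (maximalIdeal R) R] [Algebra K R]
    [Module.Finite K (ResidueField R)] {d : ℕ} (hdim : ringKrullDim R = d) :
    ∃ φ : MvPowerSeries (Fin d) K →ₐ[K] R, φ.Finite := by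
  obtain ⟨x, hx⟩ := exists_systemOfParameters hdim
  have hxm : Ideal.span (Set.range x) ≤ maximalIdeal R := hx.1.2
  obtain ⟨φ, hφ⟩ := exists_mvPowerSeries_algHom_X_eq (K := K) (maximalIdeal R)
    fun i => hxm (Ideal.subset_span (Set.mem_range_self i))
  refine ⟨φ, ?_⟩
  algebraize [φ.toRingHom]
  let A := MvPowerSeries (Fin d) K
  let I : Ideal A := Ideal.span (Set.range MvPowerSeries.X)
  have hI : I.map (algebraMap A R) = Ideal.span (Set.range x) := by
    rw [Ideal.map_span, ← Set.range_comp]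
    exact congrArg (Ideal.span <| Set.range ·) (funext hφ)
  have : IsHausdorff I R := IsHausdorff.of_map (J := maximalIdeal R) (hI.trans_le hxm)
  have : IsScalarTower K A R := IsScalarTower.of_algHom φ
  have hfinite := finite_quotient_of_maximalIdeal_mem_minimalPrimes K R hx
  have : Module.Finite A (R ⧸ (I • ⊤ : Submodule A R)) := by
    rw [Ideal.smul_top_eq_map, hI]
    exact Module.Finite.of_restrictScalars_finite K A (R ⧸ Ideal.span (Set.range x))
  exact finite_of_isPrecomplete_of_isHausdorff I

/-! ### Embedding power series rings into two variables -/

lemma uncountable_powerSeries (C : Type*) [Semiring C] [Nontrivial C] :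
    Uncountable (PowerSeries C) := by
  have : Uncountable (ℕ → C) := by
    rw [← aleph0_lt_mk_iff, mk_arrow, mk_nat, lift_aleph0]
    exact (cantor ℵ₀).trans_le (power_le_power_right (two_le_iff.mpr (exists_pair_ne _)))
  have hmk : Function.Injective (PowerSeries.mk : (ℕ → C) → PowerSeries C) := fun f g h =>
    funext fun n => by simpa only [PowerSeries.coeff_mk] using congrArg (PowerSeries.coeff n) h
  exact hmk.uncountable

lemma exists_nat_algebraicIndependent_of_uncountable (F E : Type*) [CommRing F] [Countable F]
    [CommRing E] [IsDomain E] [Uncountable E] [Algebra F E] [FaithfulSMul F E] :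
    ∃ f : ℕ → E, AlgebraicIndependent F f := by
  have := Module.nontrivial F E
  obtain ⟨s, hs⟩ := exists_isTranscendenceBasis F E
  have hinf : s.Infinite := by
    intro hfin
    have := hfin.to_subtype
    let F' := Algebra.adjoin F (Set.range ((↑) : s → E))
    have := hs.isAlgebraic
    have hF' : Countable F' := by
      rw [← mk_le_aleph0_iff, ← lift_le_aleph0]
      refine (Algebra.lift_cardinalMk_adjoin_le F _).trans ?_
      simp
    have hE : #E ≤ ℵ₀ := (Algebra.IsAlgebraic.cardinalMk_le_max F' E).trans (by simp)
    exact not_countable (mk_le_aleph0_iff.mp hE)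
  have := hinf.to_subtype
  let e := Infinite.natEmbedding s
  exact ⟨fun i => e i, hs.1.comp e e.injective⟩

lemma algebraicIndependent_powerSeries_map {k K ι : Type*} [CommRing k] [CommRing K] [Algebra k K]
    [Module.Projective k K] {f : ι → PowerSeries k} (hf : AlgebraicIndependent k f) :
    AlgebraicIndependent K fun i => PowerSeries.map (algebraMap k K) (f i) := by
  classical
  refine (injective_iff_map_eq_zero _).mpr fun P hP => ?_
  ext s
  rw [MvPolynomial.coeff_zero, ← Module.forall_dual_apply_eq_zero_iff k]
  intro ℓ
  -- A linear functional `ℓ : K → k` turns a relation over `K` into a relation over `k`.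
  let Q : MvPolynomial ι k := ∑ t ∈ P.support, MvPolynomial.monomial t (ℓ (P.coeff t))
  have hQ : MvPolynomial.aeval f Q = 0 := by
    ext n
    let c (t : ι →₀ ℕ) : k := PowerSeries.coeff n (t.prod fun i e => f i ^ e)
    have hPn : ∑ t ∈ P.support, P.coeff t * algebraMap k K (c t) = 0 := by
      have h := congrArg (PowerSeries.coeff n) hP
      rw [MvPolynomial.aeval_def, MvPolynomial.eval₂_eq] at h
      simpa [c, ← map_pow, ← map_prod, Finsupp.prod, PowerSeries.algebraMap_apply] using h
    calc PowerSeries.coeff n (MvPolynomial.aeval f Q) = ∑ t ∈ P.support, ℓ (P.coeff t) * c t := by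
          simp [Q, c, MvPolynomial.aeval_monomial]
      _ = ℓ (∑ t ∈ P.support, P.coeff t * algebraMap k K (c t)) := by
          simp_rw [map_sum, mul_comm _ (algebraMap k K _), ← Algebra.smul_def, map_smul,
            smul_eq_mul, mul_comm]
      _ = PowerSeries.coeff n 0 := by rw [hPn, map_zero, map_zero]
  have hQs := congrArg (MvPolynomial.coeff s) ((injective_iff_map_eq_zero _).mp hf Q hQ)
  by_cases hs : P.coeff s = 0
  · rw [hs, map_zero]
  · simpa [Q, MvPolynomial.coeff_sum, MvPolynomial.coeff_monomial, hs] using hQs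

lemma countable_bot_subfield (K : Type*) [Field K] : Countable (⊥ : Subfield K) := by
  rw [← Subfield.closure_empty, ← mk_le_aleph0_iff]
  exact (Subfield.cardinalMk_closure_le_max ∅).trans (by simp)

lemma exists_nat_powerSeries_algebraicIndependent (K : Type*) [Field K] :
    ∃ f : ℕ → PowerSeries K, AlgebraicIndependent K f := by
  -- `K⟦X⟧` need not have larger cardinality than `K`, hence the descent to the prime field.
  let k := (⊥ : Subfield K)
  have := countable_bot_subfield K
  have := uncountable_powerSeries k
  obtain ⟨f, hf⟩ := exists_nat_algebraicIndependent_of_uncountable k (PowerSeries k)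
  exact ⟨_, algebraicIndependent_powerSeries_map hf⟩

section SubstMonomial

variable {K S σ : Type*} [CommRing K] [CommRing S] [Algebra K S]

lemma prod_monomial_one_pow (f : σ → S) (e : σ →₀ ℕ) :
    (e.prod fun i k => PowerSeries.monomial 1 (f i) ^ k) =
      PowerSeries.monomial e.degree (e.prod fun i k => f i ^ k) := by
  simp only [Finsupp.prod, PowerSeries.monomial_pow, mul_one, PowerSeries.prod_monomial,
    Finsupp.degree_apply]

variable [Finite σ]

lemma hasSubst_monomial_one (f : σ → S) :
    MvPowerSeries.HasSubst fun i => PowerSeries.monomial 1 (f i) :=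
  MvPowerSeries.hasSubst_of_constantCoeff_zero fun i =>
    show PowerSeries.constantCoeff (PowerSeries.monomial 1 (f i)) = 0 by
      simp [PowerSeries.coeff_monomial, ← PowerSeries.coeff_zero_eq_constantCoeff_apply]

lemma coeff_subst_monomial_one (f : σ → S) (F : MvPowerSeries σ K) (n : ℕ) :
    PowerSeries.coeff n (MvPowerSeries.subst (fun i => PowerSeries.monomial 1 (f i)) F) =
      MvPolynomial.aeval f (∑ e ∈ (Finsupp.finite_of_degree_eq n).toFinset,
        MvPolynomial.monomial e (MvPowerSeries.coeff e F)) := by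
  have hcoeff (e : σ →₀ ℕ) : MvPowerSeries.coeff (Finsupp.single () n)
      (e.prod fun i k => PowerSeries.monomial 1 (f i) ^ k) =
        if n = e.degree then e.prod fun i k => f i ^ k else 0 := by
    rw [prod_monomial_one_pow]
    exact PowerSeries.coeff_monomial _ _ _
  rw [PowerSeries.coeff, MvPowerSeries.coeff_subst (hasSubst_monomial_one f),
    finsum_eq_sum_of_support_subset (s := (Finsupp.finite_of_degree_eq n).toFinset)]
  · rw [map_sum]
    refine Finset.sum_congr rfl fun e he => ?_
    rw [hcoeff, if_pos (by simpa [eq_comm] using he), MvPolynomial.aeval_monomial,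
      Algebra.smul_def]
  · intro e he
    by_contra hne
    rw [Set.Finite.coe_toFinset, Set.mem_ofPred_eq, eq_comm] at hne
    simp [hcoeff, hne] at he

lemma exists_algHom_powerSeries_injective {f : σ → S} (hf : AlgebraicIndependent K f) :
    ∃ φ : MvPowerSeries σ K →ₐ[K] PowerSeries S, Function.Injective φ := by
  classical
  have hsubst := hasSubst_monomial_one f
  let φ : MvPowerSeries σ K →ₐ[K] PowerSeries S := MvPowerSeries.substAlgHom hsubst
  refine ⟨φ, (injective_iff_map_eq_zero φ).mpr fun F hF => ?_⟩
  ext e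
  have hsubst_zero : MvPowerSeries.subst (fun i => PowerSeries.monomial 1 (f i)) F = 0 := by
    rw [← MvPowerSeries.coe_substAlgHom hsubst]
    exact hF
  have hP := coeff_subst_monomial_one f F e.degree
  rw [hsubst_zero, eq_comm, map_zero] at hP
  have hPe := congrArg (MvPolynomial.coeff e) ((injective_iff_map_eq_zero _).mp hf _ hP)
  simpa [MvPolynomial.coeff_sum, MvPolynomial.coeff_monomial] using hPe

end SubstMonomial

lemma exists_algHom_fin_min_two_injective (K : Type*) [Field K] (d : ℕ) :
    ∃ φ : MvPowerSeries (Fin d) K →ₐ[K] MvPowerSeries (Fin (min d 2)) K,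
      Function.Injective φ := by
  obtain hd | hd := le_total d 2
  · exact ⟨MvPowerSeries.rename (Fin.castLEEmb (le_min le_rfl hd)),
      MvPowerSeries.rename_injective _⟩
  · obtain ⟨f, hf⟩ := exists_nat_powerSeries_algebraicIndependent K
    let E₁ : PowerSeries K ≃ₐ[K] MvPowerSeries (Fin 1) K :=
      MvPowerSeries.renameEquiv K (Equiv.ofUnique Unit (Fin 1))
    let E₂ := (MvPowerSeries.finSuccEquiv K 1).symm
    obtain ⟨ψ, hψ⟩ := exists_algHom_powerSeries_injective <|
      (hf.comp _ Fin.val_injective : AlgebraicIndependent K fun i : Fin d => f i).map'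
        (f := E₁.toAlgHom) E₁.injective
    let r := MvPowerSeries.rename (R := K) (Fin.castLEEmb (le_min hd le_rfl))
    exact ⟨r.comp (E₂.toAlgHom.comp ψ),
      (MvPowerSeries.rename_injective _).comp (E₂.injective.comp hψ)⟩

theorem linear_over_finite_field_power_series_general {K R : Type*} [Field K] [CommRing R]
    [IsDomain R] [IsNoetherianRing R] [IsLocalRing R] [IsAdicComplete (maximalIdeal R) R]
    [Algebra K R] [Module.Finite K (ResidueField R)] {d : ℕ} (hdim : ringKrullDim R = d) (n : ℕ) :
    ∃ (m : ℕ) (f : GL (Fin n) R →* GL (Fin m) (MvPowerSeries (Fin (min d 2)) K)),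
      Function.Injective f := by
  let A := MvPowerSeries (Fin d) K
  let B := MvPowerSeries (Fin (min d 2)) K
  obtain ⟨φ, hφ⟩ := exists_finite_algHom (K := K) hdim
  obtain ⟨ψ, hψ⟩ := exists_algHom_fin_min_two_injective K d
  algebraize [φ.toRingHom, ψ.toRingHom]
  have : Module.Finite A R := hφ
  have hA : ringKrullDim A = d := by
    rw [ringKrullDim_mvPowerSeries_fin, ringKrullDim_eq_zero_of_field, zero_add]
  have hinj : Function.Injective (algebraMap A R) :=
    algebraMap_injective_of_ringKrullDim_le A R (hA.trans hdim.symm).le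
  have : FaithfulSMul A R := (faithfulSMul_iff_algebraMap_injective A R).mpr hinj
  have : FaithfulSMul A B := (faithfulSMul_iff_algebraMap_injective A B).mpr hψ
  have : Module.Free B (R →ₗ[A] B) := free_linearMap_mvPowerSeries_fin A R K (min_le_right d 2)
  have : Module.Finite B (R →ₗ[A] B) := finite_linearMap
  exact exists_generalLinearGroup_hom_injective_of_end _ (dualAction_injective A B R) n

/-- Let `R` be a commutative Noetherian local pro-`p` domain of
characteristic `p` with Krull dimension `d`. Then every subgroup of `GL_n(R)` embeds into
`GL_m(𝔽_p⟦t₁, …, t_d⟧)` for some `m`. -/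
theorem linear_over_finite_field_power_series (p : ℕ) [Fact p.Prime]
    (R : Type) [CommRing R] [IsDomain R] [IsNoetherianRing R] [IsLocalRing R]
    [IsAdicComplete (IsLocalRing.maximalIdeal R) R]
    [Finite (IsLocalRing.ResidueField R)] [CharP (IsLocalRing.ResidueField R) p]
    [CharP R p]
    (d : ℕ) (hdim : ringKrullDim R = (d : ℕ))
    (n : ℕ) (G : Subgroup (Matrix.GeneralLinearGroup (Fin n) R)) :
    ∃ (m : ℕ)
      (f : G →* Matrix.GeneralLinearGroup (Fin m) (MvPowerSeries (Fin d) (ZMod p))),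
      Function.Injective f := by
  let _ := ZMod.algebra R p
  obtain ⟨m, f, hf⟩ := linear_over_finite_field_power_series_general (K := ZMod p) hdim n
  let ι := MvPowerSeries.rename (R := ZMod p) (Fin.castLEEmb (min_le_left d 2))
  have hι : Function.Injective ι := MvPowerSeries.rename_injective _
  exact ⟨m, (Matrix.GeneralLinearGroup.map (ι : _ →+* _)).comp (f.comp G.subtype),
    (Units.map_injective (Matrix.map_injective hι)).comp (hf.comp G.subtype_injective)⟩
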